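/- Let (U_n) be defined by U_0 = 0, U_1 = 1, U_2 = -1 and U_{n+3} + U_{n+2} + U_{n+1} + 2U_n = 0 (characteristic polynomial f = x^3 + x^2 + x + 2, disc(f) = -83). Then for any prime p not in {2, 3, 47, 83}, p divides U_{p-1} if and only if there exist integers X, Y with 4p = X^2 + 83Y^2. -/

import Mathlib

/-!
For the primes in question the Binet formula shows that `p ∣ U (p - 1)` exactly when Frobenius
fixes the three roots of the cubic modulo `p`, and this can hold only if `-83` is a square modulo
`p`. When it is one, say `p ∣ x ^ 2 + x * y + 21 * y ^ 2` with `x` and `y` coprime, Frobenius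
fixes the roots exactly when the square of Frobenius fixes their Lagrange resolvent. Up to
scaling, the cube of the resolvent is the reduction of the Eisenstein integer `α = 3 * x - 22 * y
+ (6 * x + 3 * y) * ω`, so the condition says that a cubic residue symbol `(α / p)₃` is trivial.
Cubic reciprocity, proved through Gauss and Jacobi sums, rewrites this symbol as `Ψ p` for a
character `Ψ` modulo `norm α = 27 * M - 8 * y ^ 2`, where `M = x ^ 2 + x * y + 21 * y ^ 2`; the
congruence `27 * M ≡ 8 * y ^ 2` yields `Ψ M = 1`.

For `M = p` this settles the primes represented by the principal form. For `M = l * p` it shows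
that the condition holds for both or neither of the primes `l` and `p`. As the class number is
`3`, the remaining primes are represented by `3 * x ^ 2 + x * y + 7 * y ^ 2`, and can be compared
with `7`, for which `U 6 = -2`. A comparison with `11` or `23` avoids the representations of `M`
with `3 ∣ y`, where `α` is not primary.
-/

section CubicRecurrence

/-- `U` is the fundamental solution of the linear recurrence with characteristic polynomial
`X ^ 3 + P.b * X ^ 2 + P.c * X + P.d`; the leading coefficient of `P` is meant to be `1`. -/
structure IsFundamentalSeq {R : Type*} [CommRing R] (P : Cubic R) (U : ℕ → R) : Prop where
  zero : U 0 = 0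
  one : U 1 = 1
  two : U 2 = -P.b
  recurrence : ∀ n, U (n + 3) + P.b * U (n + 2) + P.c * U (n + 1) + P.d * U n = 0

/-- The Vandermonde product, a square root of the discriminant of `(X - a) (X - b) (X - c)`. -/
def vandermonde {R : Type*} [CommRing R] (a b c : R) : R := (a - b) * (a - c) * (b - c)

/-- The monic cubic `(X - a) (X - b) (X - c)`. -/
def cubicOfRoots {R : Type*} [CommRing R] (a b c : R) : Cubic R :=
  ⟨1, -(a + b + c), a * b + a * c + b * c, -(a * b * c)⟩

lemma vandermonde_sq {R : Type*} [CommRing R] (a b c : R) :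
    vandermonde a b c ^ 2 = (cubicOfRoots a b c).discr := by
  simp only [vandermonde, cubicOfRoots, Cubic.discr]
  ring

lemma IsFundamentalSeq.mul_vandermonde {R : Type*} [CommRing R] {a b c : R} {U : ℕ → R}
    (hU : IsFundamentalSeq (cubicOfRoots a b c) U) : ∀ n, U n * vandermonde a b c =
      a ^ (n + 1) * (b - c) + b ^ (n + 1) * (c - a) + c ^ (n + 1) * (a - b)
  | 0 => by rw [hU.zero]; ring
  | 1 => by rw [hU.one, vandermonde]; ring
  | 2 => by rw [hU.two, vandermonde, cubicOfRoots]; ring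
  | n + 3 => by
    have hrec := hU.recurrence n
    have h0 := hU.mul_vandermonde n
    have h1 := hU.mul_vandermonde (n + 1)
    have h2 := hU.mul_vandermonde (n + 2)
    simp only [cubicOfRoots] at hrec
    linear_combination vandermonde a b c * hrec + (a + b + c) * h2
      - (a * b + a * c + b * c) * h1 + a * b * c * h0

lemma exists_eq_cubicOfRoots {K : Type*} [Field K] [IsAlgClosed K] {P : Cubic K} (hP : P.a = 1) :
    ∃ a b c, P = cubicOfRoots a b c := by
  have ha : P.a ≠ 0 := by rw [hP]; exact one_ne_zero
  obtain ⟨a, b, c, habc⟩ := (Cubic.splits_iff_roots_eq_three (φ := RingHom.id K) ha).1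
    (IsAlgClosed.splits _)
  refine ⟨a, b, c, Cubic.ext hP ?_ ?_ ?_⟩
  · simpa [hP, cubicOfRoots] using Cubic.b_eq_three_roots ha habc
  · simpa [hP, cubicOfRoots] using Cubic.c_eq_three_roots ha habc
  · simpa [hP, cubicOfRoots] using Cubic.d_eq_three_roots ha habc

end CubicRecurrence

section Endomorphism

variable {K : Type*} [Field K] {a b c : K} {σ : K →+* K}

lemma eq_and_eq_or_swap_of_add_of_mul {x y : K} (hadd : x + y = b + c) (hmul : x * y = b * c) :
    (x = b ∧ y = c) ∨ (x = c ∧ y = b) := by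
  have hx : (x - b) * (x - c) = 0 := by linear_combination x * hadd - hmul
  obtain h | h := mul_eq_zero.1 hx
  · exact .inl ⟨sub_eq_zero.1 h, by linear_combination hadd - h⟩
  · exact .inr ⟨sub_eq_zero.1 h, by linear_combination hadd - h⟩

lemma map_roots_eq (hσ : (cubicOfRoots a b c).map σ = cubicOfRoots a b c) :
    (σ a = a ∧ (σ b = b ∧ σ c = c ∨ σ b = c ∧ σ c = b)) ∨
    (σ a = b ∧ (σ b = c ∧ σ c = a ∨ σ b = a ∧ σ c = c)) ∨
    (σ a = c ∧ (σ b = a ∧ σ c = b ∨ σ b = b ∧ σ c = a)) := by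
  have h1 := congrArg Cubic.b hσ
  have h2 := congrArg Cubic.c hσ
  have h3 := congrArg Cubic.d hσ
  simp only [cubicOfRoots, Cubic.map, map_neg, map_add, map_mul] at h1 h2 h3
  have hroot : (σ a - a) * ((σ a - b) * (σ a - c)) = 0 := by
    linear_combination -σ a ^ 2 * h1 - σ a * h2 - h3
  simp only [mul_eq_zero, sub_eq_zero] at hroot
  refine hroot.imp (fun h ↦ ⟨h, ?_⟩) (Or.imp (fun h ↦ ⟨h, ?_⟩) fun h ↦ ⟨h, ?_⟩) <;>
    rw [h] at h1 h2 <;> apply eq_and_eq_or_swap_of_add_of_mul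
  · linear_combination -h1
  · linear_combination h2 + a * h1
  · linear_combination -h1
  · linear_combination h2 + b * h1
  · linear_combination -h1
  · linear_combination h2 + c * h1

lemma sum_map_mul_sub_eq_zero_iff (hσ : (cubicOfRoots a b c).map σ = cubicOfRoots a b c)
    (hV : vandermonde a b c ≠ 0) (hquad : (a + b + c) ^ 2 - 3 * (a * b + a * c + b * c) ≠ 0)
    (hcub : (b + c - 2 * a) * (a + c - 2 * b) * (a + b - 2 * c) ≠ 0) :
    σ a * (b - c) + σ b * (c - a) + σ c * (a - b) = 0 ↔ σ a = a ∧ σ b = b ∧ σ c = c := by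
  refine ⟨fun h ↦ ?_, fun ⟨ha, hb, hc⟩ ↦ by rw [ha, hb, hc]; ring⟩
  simp only [vandermonde, mul_ne_zero_iff] at hV hcub
  obtain ⟨⟨hab, hac⟩, hbc⟩ := hV
  obtain ⟨⟨ha', hb'⟩, hc'⟩ := hcub
  obtain ⟨ha, ⟨hb, hc⟩ | ⟨hb, hc⟩⟩ | ⟨ha, ⟨hb, hc⟩ | ⟨hb, hc⟩⟩ | ⟨ha, ⟨hb, hc⟩ | ⟨hb, hc⟩⟩ :=
    map_roots_eq hσ
  · exact ⟨ha, hb, hc⟩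
  all_goals rw [ha, hb, hc] at h; exfalso
  · exact mul_ne_zero hbc ha' (by linear_combination -h)
  · exact hquad (by linear_combination h)
  · exact mul_ne_zero hab hc' (by linear_combination -h)
  · exact hquad (by linear_combination -h)
  · exact mul_ne_zero hac hb' (by linear_combination h)

/-- The Lagrange resolvent of three roots with respect to a cube root of unity `w`. -/
def lagrangeResolvent (w a b c : K) : K := a + w * b + w ^ 2 * c

lemma lagrangeResolvent_mul {w : K} (hw : w ^ 2 = -w - 1) :
    lagrangeResolvent w a b c * lagrangeResolvent (w ^ 2) a b c =
      (a + b + c) ^ 2 - 3 * (a * b + a * c + b * c) := by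
  grind [lagrangeResolvent]

lemma two_mul_lagrangeResolvent_pow_three {w : K} (hw : w ^ 2 = -w - 1) :
    2 * lagrangeResolvent w a b c ^ 3 = 2 * (a + b + c) ^ 3
      - 9 * (a + b + c) * (a * b + a * c + b * c) + 27 * (a * b * c)
      + 3 * (1 + 2 * w) * vandermonde a b c := by
  grind [lagrangeResolvent, vandermonde]

/-- An endomorphism fixing a square root of the discriminant permutes the roots cyclically, and an
iterated cyclic shift multiplies the resolvent by a power of `w`. -/
lemma map_map_lagrangeResolvent_eq_self_iff
    (hσ : (cubicOfRoots a b c).map σ = cubicOfRoots a b c) (hV : vandermonde a b c ≠ 0)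
    (hσV : σ (vandermonde a b c) = vandermonde a b c) (h2 : (2 : K) ≠ 0) {w : K} (hw1 : w ≠ 1)
    (hw : w ^ 3 = 1) (hσw : σ (σ w) = w) (hu : lagrangeResolvent w a b c ≠ 0) :
    σ (σ (lagrangeResolvent w a b c)) = lagrangeResolvent w a b c ↔
      σ a = a ∧ σ b = b ∧ σ c = c := by
  have hodd : σ (vandermonde a b c) ≠ -vandermonde a b c := fun h ↦
    mul_ne_zero h2 hV (by linear_combination h - hσV)
  refine ⟨fun h ↦ ?_, fun ⟨ha, hb, hc⟩ ↦ by simp [lagrangeResolvent, hσw, ha, hb, hc]⟩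
  simp only [vandermonde, map_mul, map_sub] at hodd
  simp only [lagrangeResolvent, map_add, map_mul, map_pow, hσw] at h hu
  obtain ⟨ha, ⟨hb, hc⟩ | ⟨hb, hc⟩⟩ | ⟨ha, ⟨hb, hc⟩ | ⟨hb, hc⟩⟩ | ⟨ha, ⟨hb, hc⟩ | ⟨hb, hc⟩⟩ :=
    map_roots_eq hσ
  · exact ⟨ha, hb, hc⟩
  all_goals simp only [ha, hb, hc] at h hodd; exfalso
  · exact hodd (by ring)
  · exact mul_ne_zero (sub_ne_zero.2 hw1) hu (by linear_combination h + c * hw)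
  · exact hodd (by ring)
  · exact mul_ne_zero (sub_ne_zero.2 hw1) hu (by linear_combination -w * h + a * hw)
  · exact hodd (by ring)

end Endomorphism

section Frobenius

variable {P : Cubic ℤ} {p : ℕ} [Fact p.Prime] {K : Type*} [Field K] [CharP K p] {a b c : K}

lemma map_frobenius_cubicOfRoots (hP : P.map (Int.castRingHom K) = cubicOfRoots a b c) :
    (cubicOfRoots a b c).map (frobenius K p) = cubicOfRoots a b c := by
  rw [← hP]
  simp [Cubic.map]

lemma IsFundamentalSeq.prime_dvd_iff {U : ℕ → ℤ} (hU : IsFundamentalSeq P U)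
    (hP : P.map (Int.castRingHom K) = cubicOfRoots a b c) (hdisc : ¬ (p : ℤ) ∣ P.discr)
    (hquad : ¬ (p : ℤ) ∣ P.b ^ 2 - 3 * P.c)
    (hcub : ¬ (p : ℤ) ∣ 2 * P.b ^ 3 - 9 * P.b * P.c + 27 * P.d) :
    (p : ℤ) ∣ U (p - 1) ↔
      frobenius K p a = a ∧ frobenius K p b = b ∧ frobenius K p c = c := by
  have hUK : IsFundamentalSeq (cubicOfRoots a b c) (fun n ↦ (U n : K)) := by
    rw [← hP]
    exact
      { zero := by simp [hU.zero]
        one := by simp [hU.one]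
        two := by simp [hU.two, Cubic.map]
        recurrence := fun n ↦ by
          simpa [Cubic.map] using congrArg (Int.cast : ℤ → K) (hU.recurrence n) }
  have hpb : (P.b : K) = -(a + b + c) := congrArg Cubic.b hP
  have hpc : (P.c : K) = a * b + a * c + b * c := congrArg Cubic.c hP
  have hpd : (P.d : K) = -(a * b * c) := congrArg Cubic.d hP
  have hdiscK : (P.discr : K) = vandermonde a b c ^ 2 := by
    rw [vandermonde_sq, ← hP]
    simp [Cubic.discr, Cubic.map]
  simp only [← CharP.intCast_eq_zero_iff K p] at hdisc hquad hcub ⊢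
  push_cast [hpb, hpc, hpd] at hquad hcub
  have hV : vandermonde a b c ≠ 0 := fun h ↦ hdisc (by rw [hdiscK, h, zero_pow two_ne_zero])
  rw [← sum_map_mul_sub_eq_zero_iff (map_frobenius_cubicOfRoots hP) hV
    (fun h ↦ hquad (by linear_combination h)) (fun h ↦ hcub (by linear_combination h)),
    ← mul_eq_zero_iff_right hV, hUK.mul_vandermonde, Nat.sub_add_cancel (Fact.out : p.Prime).one_le]
  simp only [frobenius_def]

end Frobenius

/-- The ring `ℤ[ω]` of Eisenstein integers, where `ω ^ 2 + ω + 1 = 0`. -/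
abbrev EisensteinInt := QuadraticAlgebra ℤ (-1) (-1)

namespace EisensteinInt

open QuadraticAlgebra

lemma self_mul_star (z : EisensteinInt) : z * star z = (z.norm : EisensteinInt) :=
  (algebraMap_norm_eq_mul_star z).symm

lemma four_mul_norm (z : EisensteinInt) : 4 * z.norm = (2 * z.re - z.im) ^ 2 + 3 * z.im ^ 2 := by
  rw [norm_def]
  ring

lemma norm_nonneg (z : EisensteinInt) : 0 ≤ z.norm := by
  linarith [four_mul_norm z, sq_nonneg (2 * z.re - z.im), sq_nonneg z.im]

lemma norm_eq_zero_iff {z : EisensteinInt} : z.norm = 0 ↔ z = 0 := by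
  refine ⟨fun h ↦ ?_, fun h ↦ by simp [h]⟩
  have hsum := four_mul_norm z
  have him : z.im = 0 := by nlinarith [sq_nonneg (2 * z.re - z.im)]
  have hre : z.re = 0 := by nlinarith
  exact QuadraticAlgebra.ext hre him

instance : IsDomain EisensteinInt :=
  have : NoZeroDivisors EisensteinInt :=
    ⟨fun {x y} h ↦ by simpa [norm_eq_zero_iff] using congrArg QuadraticAlgebra.norm h⟩
  NoZeroDivisors.to_isDomain _

lemma isPrimitiveRoot_omega : IsPrimitiveRoot (ω : EisensteinInt) 3 := by
  refine IsPrimitiveRoot.iff_orderOf.2 (orderOf_eq_prime (by decide) (by decide))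

section Hom

variable {R : Type*} [CommRing R] (φ : EisensteinInt →+* R)

lemma map_omega_sq : φ ω ^ 2 = -φ ω - 1 := by
  rw [← map_pow, show (ω : EisensteinInt) ^ 2 = -ω - 1 by decide]
  simp

lemma map_apply (z : EisensteinInt) : φ z = z.re + z.im * φ ω := by
  have hz : z = (z.re : EisensteinInt) + (z.im : EisensteinInt) * ω := by ext <;> simp
  conv_lhs => rw [hz]
  simp

lemma nonempty_ringHom (K : Type*) [Field K] [IsAlgClosed K] :
    Nonempty (EisensteinInt →+* K) := by
  have hdeg : (Polynomial.X ^ 2 + Polynomial.X + 1 : Polynomial K).degree = 2 := by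
    compute_degree!
  obtain ⟨w, hw⟩ := IsAlgClosed.exists_root _ (hdeg.trans_ne two_ne_zero)
  have hw : w ^ 2 + w + 1 = 0 := by simpa using hw
  exact ⟨(lift ⟨w, by simp only [neg_smul, one_smul]; linear_combination hw⟩).toRingHom⟩

end Hom

section CharP

variable {p : ℕ} {K : Type*} [Field K] [CharP K p]

lemma three_ne_zero_of_charP (hp : p ≠ 3) : (3 : K) ≠ 0 := by
  exact_mod_cast CharP.cast_ne_zero_of_ne_of_prime K Nat.prime_three hp

lemma eq_one_of_map_eq_one (hp : p ≠ 3) (φ : EisensteinInt →+* K) {z : EisensteinInt}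
    (hz : z ^ 3 = 1) (hφ : φ z = 1) : z = 1 := by
  by_contra hne
  have hroot : z ^ 2 + z + 1 = 0 :=
    (mul_eq_zero.1 (by linear_combination hz : (z - 1) * (z ^ 2 + z + 1) = 0)).resolve_left
      (sub_ne_zero.2 hne)
  have h3 := congrArg φ hroot
  simp only [map_add, map_pow, hφ, map_one, map_zero] at h3
  exact three_ne_zero_of_charP (K := K) hp (by linear_combination h3)

variable [Fact p.Prime]

lemma sq_mod_three (hp : p ≠ 3) : p ^ 2 % 3 = 1 := by
  have h0 : p % 3 ≠ 0 := fun h ↦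
    hp ((Nat.prime_dvd_prime_iff_eq Nat.prime_three Fact.out).1 (Nat.dvd_of_mod_eq_zero h)).symm
  obtain h | h : p % 3 = 1 ∨ p % 3 = 2 := by omega
  all_goals simp [Nat.pow_mod, h]

lemma pow_prime_sq_eq_self (hp : p ≠ 3) {M : Type*} [Monoid M] {x : M} (hx : x ^ 3 = 1) :
    x ^ p ^ 2 = x := by
  rw [← Nat.div_add_mod (p ^ 2) 3, sq_mod_three hp, pow_succ, pow_mul, hx, one_pow, one_mul]

lemma map_pow_sq (hp : p ≠ 3) (φ : EisensteinInt →+* K) (z : EisensteinInt) :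
    φ z ^ p ^ 2 = φ z := by
  have hω : (φ ω) ^ p ^ 2 = φ ω :=
    pow_prime_sq_eq_self hp (by rw [← map_pow, isPrimitiveRoot_omega.pow_eq_one, map_one])
  simpa [iterateFrobenius_def, hω, ← map_apply φ z] using
    map_apply ((iterateFrobenius K p 2).comp φ) z

end CharP

section CubicCharacter

variable {q : ℕ} [Fact q.Prime] {χ : MulChar (ZMod q) EisensteinInt}

lemma mulChar_pow_three (hχ : orderOf χ = 3) (a : (ZMod q)ˣ) : χ a ^ 3 = 1 := by
  rw [← MulChar.pow_apply_coe, ← hχ, pow_orderOf_eq_one, MulChar.one_apply_coe]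

lemma norm_eq_one_of_pow_eq_one {z : EisensteinInt} {n : ℕ} (hn : n ≠ 0) (h : z ^ n = 1) :
    z.norm = 1 := by
  have hz := congrArg QuadraticAlgebra.norm h
  rw [map_pow, map_one] at hz
  exact (pow_eq_one_iff_of_nonneg (norm_nonneg z) hn).1 hz

lemma star_mulChar (hχ : orderOf χ = 3) : star χ = χ⁻¹ := by
  refine eq_inv_of_mul_eq_one_left (MulChar.ext fun a ↦ ?_)
  rw [MulChar.mul_apply, MulChar.star_apply, mul_comm, self_mul_star,
    norm_eq_one_of_pow_eq_one three_ne_zero (mulChar_pow_three hχ a), MulChar.one_apply_coe,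
    Int.cast_one]

lemma mulChar_ne_one {R : Type*} [CommRing R] {η : MulChar R EisensteinInt}
    (hη : orderOf η = 3) : η ≠ 1 := by
  rintro rfl
  simp at hη

lemma norm_jacobiSum (hχ : orderOf χ = 3) : (jacobiSum χ χ).norm = q := by
  let ι := algebraMap EisensteinInt (FractionRing EisensteinInt)
  have hι : Function.Injective ι := IsFractionRing.injective _ _
  have hchar : ringChar (FractionRing EisensteinInt) ≠ ringChar (ZMod q) := by
    rw [ZMod.ringChar_zmod_n, ringChar.eq_zero]
    exact (Fact.out : q.Prime).ne_zero.symm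
  have hstar : star (jacobiSum χ χ) = jacobiSum χ⁻¹ χ⁻¹ := by
    rw [← star_mulChar hχ]
    exact (jacobiSum_ringHomComp χ χ (starRingEnd EisensteinInt)).symm
  have hχ2 : χ * χ ≠ 1 := sq χ ▸ pow_ne_one_of_lt_orderOf two_ne_zero (by omega)
  have hmul := jacobiSum_mul_jacobiSum_inv hchar
    ((MulChar.ringHomComp_ne_one_iff hι).2 (mulChar_ne_one hχ))
    ((MulChar.ringHomComp_ne_one_iff hι).2 (mulChar_ne_one hχ))
    (by rw [← MulChar.ringHomComp_mul]; exact (MulChar.ringHomComp_ne_one_iff hι).2 hχ2)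
  rw [MulChar.ringHomComp_inv, jacobiSum_ringHomComp, jacobiSum_ringHomComp, ← map_mul, ← hstar,
    self_mul_star, ZMod.card, ← map_natCast ι, hι.eq_iff] at hmul
  exact_mod_cast congrArg re hmul

lemma three_dvd_jacobiSum (hq : 3 ∣ q - 1) (hχ : orderOf χ = 3) :
    3 ∣ (jacobiSum χ χ).re + 1 ∧ 3 ∣ (jacobiSum χ χ).im := by
  have hχ3 : χ ^ 3 = 1 := hχ ▸ pow_orderOf_eq_one χ
  obtain ⟨z, -, hz⟩ := exists_jacobiSum_eq_neg_one_add (n := 3) (by norm_num) hχ3 hχ3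
    (by rwa [ZMod.card]) isPrimitiveRoot_omega
  have hω : ((ω : EisensteinInt) - 1) ^ 2 = -3 * ω := by decide
  rw [hω] at hz
  rw [hz]
  constructor <;> simp

end CubicCharacter

section Reciprocity

/-- The cubic residue symbol `(α / p)₃` of a rational prime `p ≠ 3`, as an element of a ring of
characteristic `p` to which `ℤ[ω]` is mapped. For `p % 3 = 2` one has `star α = α ^ p` modulo `p`,
so that `α ^ 2 * star α = α ^ (p + 2)` has the symbol of `α`; for `p = π * star π` the exponent is
`(p + 1) * ((p - 1) / 3)`, which modulo `π` gives
`((α / π)₃ ^ 2 * (star α / π)₃) ^ 2 = (α / π)₃ * (α / star π)₃`. -/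
def cubicResidue (p : ℕ) {R : Type*} [CommRing R] (φ : EisensteinInt →+* R) :
    EisensteinInt →* R where
  toFun α := φ (α ^ 2 * star α) ^ ((p ^ 2 - 1) / 3)
  map_one' := by simp
  map_mul' α β := by simp only [star_mul', map_mul, map_pow]; ring

lemma cubicResidue_apply (p : ℕ) {R : Type*} [CommRing R] (φ : EisensteinInt →+* R)
    (α : EisensteinInt) : cubicResidue p φ α = φ (α ^ 2 * star α) ^ ((p ^ 2 - 1) / 3) := rfl

lemma gaussSum_pow_char_pow {F R : Type*} [CommRing F] [Fintype F] [CommRing R] {p : ℕ}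
    [Fact p.Prime] [CharP R p] (hp : IsUnit (p : F)) {χ : MulChar F R} {k : ℕ}
    (hχ : χ ^ p ^ k = χ) (ψ : AddChar F R) :
    χ p ^ k * gaussSum χ ψ ^ p ^ k = gaussSum χ ψ := by
  have hfrob : gaussSum χ ψ ^ p ^ k = gaussSum (χ ^ p ^ k) (ψ ^ p ^ k) := by
    clear hχ
    induction k with
    | zero => simp
    | succ k ih => rw [pow_succ, pow_mul, ih, gaussSum_frob, pow_mul, pow_mul]
  rw [hfrob, hχ, AddChar.pow_mulShift, ← gaussSum_mulShift χ ψ (hp.unit ^ k)]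
  simp

variable {p q : ℕ} [Fact q.Prime] {K : Type*} [Field K] [CharP K p]
  {χ : MulChar (ZMod q) EisensteinInt}

lemma orderOf_ringHomComp (hp : p ≠ 3) (φ : EisensteinInt →+* K) (hχ : orderOf χ = 3) :
    orderOf (χ.ringHomComp φ) = 3 := by
  refine orderOf_eq_prime ?_ fun h ↦ mulChar_ne_one hχ (MulChar.ext fun a ↦ ?_)
  · rw [MulChar.ringHomComp_pow, ← hχ, pow_orderOf_eq_one, MulChar.ringHomComp_one]
  · rw [MulChar.one_apply_coe]
    exact eq_one_of_map_eq_one hp φ (mulChar_pow_three hχ a)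
      (by rw [← MulChar.ringHomComp_apply, h, MulChar.one_apply_coe])

lemma gaussSum_pow_three (hp : p ≠ 3) (φ : EisensteinInt →+* K) (hχ : orderOf χ = 3)
    {ψ : AddChar (ZMod q) K} (hψ : ψ.IsPrimitive) :
    gaussSum (χ.ringHomComp φ) ψ ^ 3 = φ (jacobiSum χ χ ^ 2 * star (jacobiSum χ χ)) := by
  have hord := orderOf_ringHomComp hp φ hχ
  have hneg : (χ.ringHomComp φ) (-1) = 1 := by
    rw [MulChar.ringHomComp_apply, show χ (-1) = 1 from ?_, map_one]
    have h3 : χ (-1) ^ 3 = 1 := by simpa using mulChar_pow_three hχ (-1)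
    have h2 : χ (-1) ^ 2 = 1 := by simp [← map_pow]
    rwa [pow_succ, h2, one_mul] at h3
  have hpow := gaussSum_pow_eq_prod_jacobiSum (χ := χ.ringHomComp φ) (by omega) hψ
  rw [hord, hneg, ZMod.card, show Finset.Ico 1 (3 - 1) = {1} by decide, Finset.prod_singleton,
    pow_one, jacobiSum_ringHomComp] at hpow
  have hq : (q : K) = φ (jacobiSum χ χ * star (jacobiSum χ χ)) := by
    rw [self_mul_star, norm_jacobiSum hχ]
    simp
  rw [hpow, hq, one_mul, ← map_mul]
  congr 1
  ring

lemma cubicResidue_jacobiSum [Fact p.Prime] (hp : p ≠ 3) (hpq : p ≠ q) [IsAlgClosed K]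
    (φ : EisensteinInt →+* K) (hχ : orderOf χ = 3) :
    cubicResidue p φ (jacobiSum χ χ) = φ (χ p) := by
  have hqK : (q : K) ≠ 0 := by
    rw [Ne, CharP.cast_eq_zero_iff K p]
    exact fun h ↦ hpq ((Nat.prime_dvd_prime_iff_eq Fact.out Fact.out).1 h)
  have hpu : IsUnit (p : ZMod q) := by
    rw [isUnit_iff_ne_zero, Ne, ZMod.natCast_eq_zero_iff]
    exact fun h ↦ hpq ((Nat.prime_dvd_prime_iff_eq Fact.out Fact.out).1 h).symm
  have : NeZero (q : K) := ⟨hqK⟩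
  obtain ⟨ζ, hζ⟩ := HasEnoughRootsOfUnity.exists_primitiveRoot K q
  have hψ := AddChar.zmodChar_primitive_of_primitive_root q hζ
  set ψ := AddChar.zmodChar q hζ.pow_eq_one
  have hord := orderOf_ringHomComp hp φ hχ
  have hG0 : gaussSum (χ.ringHomComp φ) ψ ≠ 0 :=
    gaussSum_ne_zero_of_nontrivial (by rwa [ZMod.card]) (fun h ↦ by simp [h] at hord) hψ
  have hfrob := gaussSum_pow_char_pow hpu (χ := χ.ringHomComp φ) (k := 2)
    (pow_prime_sq_eq_self hp (hord ▸ pow_orderOf_eq_one _)) ψ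
  have hχp : φ (χ p) ^ 3 = 1 := by
    rw [← map_pow, ← hpu.unit_spec, mulChar_pow_three hχ, map_one]
  have hdvd : 3 * ((p ^ 2 - 1) / 3) + 1 = p ^ 2 := by have := sq_mod_three hp; omega
  rw [cubicResidue_apply, ← gaussSum_pow_three hp φ hχ hψ, ← pow_mul]
  refine mul_right_cancel₀ hG0 ?_
  rw [← pow_succ, hdvd]
  rw [MulChar.ringHomComp_apply] at hfrob
  linear_combination φ (χ p) * hfrob - gaussSum (χ.ringHomComp φ) ψ ^ p ^ 2 * hχp

end Reciprocity

section Factor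

variable {q : ℕ} [Fact q.Prime]

lemma pow_three_injective (hq : q % 3 = 2) : Function.Injective (· ^ 3 : ZMod q → ZMod q) := by
  obtain ⟨k, hk⟩ : ∃ k, q = 3 * k + 2 := ⟨q / 3, by omega⟩
  refine Function.LeftInverse.injective (g := (· ^ (2 * k + 1))) fun x ↦ ?_
  calc (x ^ 3) ^ (2 * k + 1) = x ^ (q + (3 * k + 1)) := by rw [← pow_mul]; congr 1; omega
    _ = x ^ q := by rw [pow_add, ZMod.pow_card, ← pow_succ', ← hk, ZMod.pow_card]
    _ = x := ZMod.pow_card x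

lemma natCast_dvd_of_dvd_norm (hq : q % 3 = 2) {z : EisensteinInt} (hz : (q : ℤ) ∣ z.norm) :
    (q : EisensteinInt) ∣ z := by
  rw [← map_natCast (algebraMap ℤ EisensteinInt), algebraMap_dvd_iff]
  simp only [← ZMod.intCast_zmod_eq_zero_iff_dvd, norm_def] at hz ⊢
  push_cast at hz
  have hcube : (z.re : ZMod q) ^ 3 = (-z.im : ZMod q) ^ 3 := by
    linear_combination ((z.re : ZMod q) + z.im) * hz
  have hre : (z.re : ZMod q) = -z.im := pow_three_injective hq hcube
  have h3 : (3 : ZMod q) ≠ 0 := three_ne_zero_of_charP (p := q) (by omega)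
  have him : (z.im : ZMod q) = 0 := by
    have h : 3 * (z.im : ZMod q) ^ 2 = 0 := by
      linear_combination hz + (2 * (z.im : ZMod q) - z.re) * hre
    simpa [h3] using h
  exact ⟨by rw [hre, him, neg_zero], him⟩

lemma dvd_or_star_dvd {π z : EisensteinInt} (hπ : π.norm = q) (hz : (q : ℤ) ∣ z.norm) :
    π ∣ z ∨ star π ∣ z := by
  have hq := Nat.prime_iff_prime_int.1 (Fact.out : q.Prime)
  have key : ∀ ρ : EisensteinInt, ρ.norm = q → (q : ℤ) ∣ (z * star ρ).im → ρ ∣ z := by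
    intro ρ hρ him
    have hre : (q : ℤ) ∣ (z * star ρ).re := by
      refine hq.dvd_of_dvd_pow (n := 2) ?_
      have hnorm : (q : ℤ) ∣ (z * star ρ).norm := by rw [map_mul]; exact hz.mul_right _
      have hsq : (z * star ρ).re ^ 2 = (z * star ρ).norm
          + (z * star ρ).im * ((z * star ρ).re - (z * star ρ).im) := by
        rw [norm_def]
        ring
      rw [hsq]
      exact dvd_add hnorm (him.mul_right _)
    obtain ⟨w, hw⟩ := (algebraMap_dvd_iff (r := (q : ℤ))).2 ⟨hre, him⟩
    rw [← hρ, algebraMap_norm_eq_mul_star, mul_right_comm] at hw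
    have hstar : star ρ ≠ 0 :=
      star_ne_zero.2 fun h ↦ hq.ne_zero (by rw [← hρ, norm_eq_zero_iff.2 h])
    exact ⟨w, mul_right_cancel₀ hstar hw⟩
  have hprod : (q : ℤ) ∣ (z * star π).im * (z * π).im := by
    have h : (z * star π).im * (z * π).im = z.im ^ 2 * π.norm - π.im ^ 2 * z.norm := by
      simp only [norm_def, im_mul, re_star, im_star]
      ring
    rw [h, hπ]
    exact dvd_sub (dvd_mul_left _ _) (hz.mul_left _)
  exact (hq.dvd_or_dvd hprod).imp (key π hπ)
    fun h ↦ key (star π) ((QuadraticAlgebra.norm_star π).trans hπ) (by rwa [star_star])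

end Factor

section Primary

/-- Primary Eisenstein integers: those congruent modulo `3` to a rational integer prime to `3`. -/
structure IsPrimary (α : EisensteinInt) : Prop where
  three_dvd_im : 3 ∣ α.im
  not_three_dvd_re : ¬ 3 ∣ α.re

variable {α π β : EisensteinInt}

lemma IsPrimary.star (hα : IsPrimary α) : IsPrimary (star α) := by
  obtain ⟨him, hre⟩ := hα
  constructor
  · rw [im_star]; omega
  · rw [re_star]; omega

lemma IsPrimary.of_mul_left (h : IsPrimary (π * β)) (hπ : IsPrimary π) : IsPrimary β := by
  obtain ⟨k, hk⟩ := hπ.three_dvd_im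
  have him := h.three_dvd_im
  have hre := h.not_three_dvd_re
  rw [im_mul, hk] at him
  rw [re_mul, hk] at hre
  refine ⟨(Int.prime_three.dvd_or_dvd (a := π.re) ?_).resolve_left hπ.not_three_dvd_re,
    fun h3 ↦ hre ?_⟩
  · have : (3 : ℤ) ∣ 3 * (k * (β.im - β.re)) := dvd_mul_right _ _
    convert him.add this using 1
    ring
  · exact dvd_add (h3.mul_left _) ⟨-k * β.im, by ring⟩

lemma IsPrimary.not_three_dvd_norm (hα : IsPrimary α) : ¬ 3 ∣ α.norm := fun h ↦ by
  refine hα.not_three_dvd_re (Int.prime_three.dvd_of_dvd_pow (n := 2) ?_)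
  rw [show α.re ^ 2 = α.norm + α.im * (α.re - α.im) by rw [norm_def]; ring]
  exact h.add (hα.three_dvd_im.mul_right _)

lemma IsPrimary.eq_intCast_of_norm_eq_one (hα : IsPrimary α) (h : α.norm = 1) :
    α = (α.re : EisensteinInt) := by
  have him : α.im = 0 := by
    obtain ⟨k, hk⟩ := hα.three_dvd_im
    have hsum := four_mul_norm α
    rw [h, hk] at hsum
    have hk0 : k = 0 := by
      by_contra hk0
      have hk2 : 0 < k ^ 2 := by positivity
      nlinarith [sq_nonneg (2 * α.re - 3 * k)]
    rw [hk, hk0, mul_zero]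
  ext <;> simp [him]

end Primary

section ResidueOne

lemma map_ne_zero_of_not_dvd_norm {p : ℕ} {R : Type*} [CommRing R] [CharP R p]
    (φ : EisensteinInt →+* R) {α : EisensteinInt} (hα : ¬ (p : ℤ) ∣ α.norm) : φ α ≠ 0 := by
  rw [← CharP.intCast_eq_zero_iff R p, ← map_intCast φ, ← self_mul_star, map_mul] at hα
  exact left_ne_zero_of_mul hα

variable {p : ℕ} [Fact p.Prime] {K : Type*} [Field K] (φ : EisensteinInt →+* K)
  {α : EisensteinInt}

lemma cubicResidue_eq_one_iff_of_eq_pow_three (hp : p ≠ 3) {β : K} (hβ : β ≠ 0)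
    (h : φ (α ^ 2 * star α) = β ^ 3) : cubicResidue p φ α = 1 ↔ β ^ p ^ 2 = β := by
  have hexp : 3 * ((p ^ 2 - 1) / 3) = p ^ 2 - 1 := by have := sq_mod_three hp; omega
  have hpos : 0 < p ^ 2 := pow_pos (Fact.out : p.Prime).pos 2
  rw [cubicResidue_apply, h, ← pow_mul, hexp, ← mul_left_inj' hβ, ← pow_succ,
    Nat.sub_add_cancel hpos, one_mul]

variable [CharP K p]

lemma cubicResidue_intCast (hp : p ≠ 3) {n : ℤ} (hn : ¬ (p : ℤ) ∣ n) :
    cubicResidue p φ (n : EisensteinInt) = 1 := by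
  refine (cubicResidue_eq_one_iff_of_eq_pow_three φ hp (β := φ n) ?_ ?_).2 (map_pow_sq hp φ n)
  · rwa [map_intCast, Ne, CharP.intCast_eq_zero_iff K p]
  · rw [← map_pow, star_intCast, pow_succ _ 2]

lemma cubicResidue_eq_one_of_map_star (hp : p ≠ 3) (hα : ¬ (p : ℤ) ∣ α.norm)
    (hstar : φ (star α) = -φ α) : cubicResidue p φ α = 1 := by
  refine (cubicResidue_eq_one_iff_of_eq_pow_three φ hp (β := φ (-α)) ?_ ?_).2
    (map_pow_sq hp φ (-α))
  · rw [map_neg]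
    exact neg_ne_zero.2 (map_ne_zero_of_not_dvd_norm φ hα)
  · rw [map_mul, map_pow, hstar, map_neg]
    ring

end ResidueOne

/-- `Ψ` is a character modulo `α.norm` with values in the cube roots of unity which evaluates the
cubic residue symbols of `α` by reciprocity: `(α / p)₃ = Ψ p`. -/
structure IsReciprocityChar (α : EisensteinInt) (Ψ : ℤ →* EisensteinInt) : Prop where
  periodic : ∀ m n : ℤ, α.norm ∣ m - n → Ψ m = Ψ n
  pow_three : ∀ n : ℤ, IsCoprime n α.norm → Ψ n ^ 3 = 1
  reciprocity : ∀ (p : ℕ) [Fact p.Prime], p ≠ 3 → ¬ (p : ℤ) ∣ α.norm →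
    ∀ φ : EisensteinInt →+* AlgebraicClosure (ZMod p), cubicResidue p φ α = φ (Ψ p)

namespace IsReciprocityChar

variable {α β : EisensteinInt} {Ψ Θ : ℤ →* EisensteinInt}

lemma mul (hα : IsReciprocityChar α Ψ) (hβ : IsReciprocityChar β Θ) :
    IsReciprocityChar (α * β) (Ψ * Θ) where
  periodic m n h := by
    rw [map_mul] at h
    rw [MonoidHom.mul_apply, MonoidHom.mul_apply, hα.periodic m n (dvd_of_mul_right_dvd h),
      hβ.periodic m n (dvd_of_mul_left_dvd h)]
  pow_three n h := by
    rw [map_mul] at h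
    rw [MonoidHom.mul_apply, mul_pow, hα.pow_three n h.of_mul_right_left,
      hβ.pow_three n h.of_mul_right_right, one_mul]
  reciprocity p _ hp h φ := by
    rw [map_mul] at h
    rw [map_mul, MonoidHom.mul_apply, map_mul, hα.reciprocity p hp (mt (·.mul_right _) h),
      hβ.reciprocity p hp (mt (·.mul_left _) h)]

lemma intCast (n : ℤ) : IsReciprocityChar (n : EisensteinInt) 1 where
  periodic _ _ _ := rfl
  pow_three _ _ := one_pow 3
  reciprocity p _ hp h φ := by
    rw [norm_intCast, Int.cast_id] at h
    rw [cubicResidue_intCast φ hp (mt (dvd_pow · two_ne_zero) h), MonoidHom.one_apply, map_one]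

lemma star (hα : IsReciprocityChar α Ψ) :
    IsReciprocityChar (star α) ((starRingEnd EisensteinInt : _ →* EisensteinInt).comp Ψ) where
  periodic m n h :=
    congrArg (starRingEnd EisensteinInt) (hα.periodic m n (QuadraticAlgebra.norm_star α ▸ h))
  pow_three n h := by
    rw [MonoidHom.comp_apply, ← map_pow, hα.pow_three n (QuadraticAlgebra.norm_star α ▸ h), map_one]
  reciprocity p _ hp h φ := by
    rw [QuadraticAlgebra.norm_star] at h
    have hφ := hα.reciprocity p hp h (φ.comp (starRingEnd EisensteinInt))
    simpa [cubicResidue_apply, starRingEnd_apply] using hφ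

lemma jacobiSum {q : ℕ} [Fact q.Prime] {χ : MulChar (ZMod q) EisensteinInt}
    (hχ : orderOf χ = 3) :
    IsReciprocityChar (jacobiSum χ χ)
      (χ.toMonoidHom.comp (Int.castRingHom (ZMod q) : ℤ →* ZMod q)) where
  periodic m n h := by
    rw [norm_jacobiSum hχ] at h
    exact congrArg χ ((ZMod.intCast_eq_intCast_iff_dvd_sub n m q).2 h).symm
  pow_three n h := by
    rw [norm_jacobiSum hχ] at h
    have hu : IsUnit (n : ZMod q) := (ZMod.coe_int_isUnit_iff_isCoprime n q).2 h.symm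
    exact mulChar_pow_three hχ hu.unit
  reciprocity p _ hp h φ := by
    rw [norm_jacobiSum hχ] at h
    rw [cubicResidue_jacobiSum hp (by rintro rfl; exact h dvd_rfl) φ hχ]
    exact congrArg (fun a ↦ φ (χ a)) (Int.cast_natCast p).symm

end IsReciprocityChar

namespace IsPrimary

variable {α : EisensteinInt}

lemma exists_factor (hα : IsPrimary α) (h : α.norm ≠ 1) :
    ∃ π, π ∣ α ∧ 1 < π.norm ∧ IsPrimary π ∧ ∃ Ψ, IsReciprocityChar π Ψ := by
  obtain ⟨q, hq, hqα⟩ := Nat.exists_prime_and_dvd (n := α.norm.natAbs)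
    (by have := norm_nonneg α; omega)
  have : Fact q.Prime := ⟨hq⟩
  have hq2 := hq.two_le
  rw [← Int.natCast_dvd] at hqα
  have hq3 : q % 3 ≠ 0 := fun h3 ↦ hα.not_three_dvd_norm ((by omega : (3 : ℤ) ∣ q).trans hqα)
  obtain hq1 | hq2 : q % 3 = 1 ∨ q % 3 = 2 := by omega
  · obtain ⟨χ, hχ⟩ := MulChar.exists_mulChar_orderOf (ZMod q) (n := 3)
      (by rw [ZMod.card]; omega) isPrimitiveRoot_omega
    obtain ⟨hre, him⟩ := three_dvd_jacobiSum (by omega) hχ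
    have hJ : IsPrimary (jacobiSum χ χ) := ⟨him, by omega⟩
    have hΨ := IsReciprocityChar.jacobiSum hχ
    have hnorm := norm_jacobiSum hχ
    obtain hdvd | hdvd := dvd_or_star_dvd hnorm hqα
    · exact ⟨_, hdvd, by omega, hJ, _, hΨ⟩
    · exact ⟨_, hdvd, by rw [QuadraticAlgebra.norm_star]; omega, hJ.star, _, hΨ.star⟩
  · refine ⟨(q : ℤ), by exact_mod_cast natCast_dvd_of_dvd_norm hq2 hqα, ?_, ⟨?_, ?_⟩, 1,
      IsReciprocityChar.intCast q⟩
    · rw [norm_intCast, Int.cast_id]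
      exact one_lt_pow₀ (by exact_mod_cast hq.one_lt) two_ne_zero
    · rw [im_intCast]
      exact dvd_zero 3
    · rw [re_intCast, Int.cast_id]
      omega

theorem exists_isReciprocityChar (hα : IsPrimary α) : ∃ Ψ, IsReciprocityChar α Ψ := by
  induction hN : α.norm.natAbs using Nat.strong_induction_on generalizing α with
  | _ N ih =>
    by_cases h1 : α.norm = 1
    · rw [hα.eq_intCast_of_norm_eq_one h1]
      exact ⟨1, IsReciprocityChar.intCast α.re⟩
    obtain ⟨π, ⟨β, rfl⟩, hπ1, hπ, Ψ, hΨ⟩ := hα.exists_factor h1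
    have hβ := hα.of_mul_left hπ
    have hβ0 : 0 < β.norm := (norm_nonneg β).lt_of_ne fun h ↦
      hβ.not_three_dvd_norm (h ▸ dvd_zero 3)
    have hlt : β.norm < (π * β).norm := by
      rw [map_mul]
      exact lt_mul_left hβ0 hπ1
    obtain ⟨Θ, hΘ⟩ := ih _ (by omega) hβ rfl
    exact ⟨Ψ * Θ, hΨ.mul hΘ⟩

end IsPrimary

end EisensteinInt

lemma map_eq_one_of_forall_prime_dvd {M : Type*} [Monoid M] (f : ℕ →* M) {n : ℕ} (hn : n ≠ 0)
    (hf : ∀ r, r.Prime → r ∣ n → f r = 1) : f n = 1 := by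
  induction n using induction_on_primes with
  | zero => exact absurd rfl hn
  | one => exact map_one f
  | prime_mul r n hr ih =>
    rw [map_mul, hf r hr (dvd_mul_right r n), one_mul]
    exact ih (right_ne_zero_of_mul hn) fun s hs hsn ↦ hf s hs (hsn.mul_left r)

namespace EisensteinInt

open QuadraticAlgebra

/-- `y` times the cube of a Lagrange resolvent of `X ^ 3 + X ^ 2 + X + 2`, where `x / y` stands for
the root `θ` of `X ^ 2 + X + 21` such that `2 * θ + 1` is the Vandermonde product of the roots of
the cubic. -/
def resolventCube (x y : ℤ) : EisensteinInt := ⟨3 * x - 22 * y, 6 * x + 3 * y⟩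

variable {x y : ℤ}

lemma norm_resolventCube :
    (resolventCube x y).norm = 27 * (x ^ 2 + x * y + 21 * y ^ 2) - 8 * y ^ 2 := by
  rw [norm_def, resolventCube]
  ring

lemma resolventCube_add_star : resolventCube x y + star (resolventCube x y) = (-47 * y : ℤ) := by
  ext
  · simp [resolventCube]
    ring
  · simp

lemma isPrimary_resolventCube (hy : ¬ 3 ∣ y) : IsPrimary (resolventCube x y) :=
  ⟨⟨2 * x + y, by rw [resolventCube]; ring⟩, show ¬ 3 ∣ 3 * x - 22 * y by omega⟩

lemma isCoprime_three_norm_resolventCube (hy : ¬ 3 ∣ y) : IsCoprime 3 (resolventCube x y).norm := by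
  rw [Int.prime_three.coprime_iff_not_dvd]
  exact (isPrimary_resolventCube hy).not_three_dvd_norm

lemma isCoprime_right_norm_resolventCube (h : IsCoprime x y) (hy : ¬ 3 ∣ y) :
    IsCoprime y (resolventCube x y).norm := by
  have h3 : IsCoprime y 27 := by
    rw [show (27 : ℤ) = 3 ^ 3 by norm_num]
    exact (((Int.prime_three.coprime_iff_not_dvd).2 hy).symm).pow_right
  have hx : IsCoprime y (27 * x ^ 2) := h3.mul_right h.symm.pow_right
  rw [norm_resolventCube, show 27 * (x ^ 2 + x * y + 21 * y ^ 2) - 8 * y ^ 2 =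
    27 * x ^ 2 + y * (27 * x + 559 * y) by ring]
  exact hx.add_mul_left_right (27 * x + 559 * y)

variable {Ψ : ℤ →* EisensteinInt}

/-- Modulo a prime divisor of `y`, the conjugate of `resolventCube x y` is its negative. -/
lemma IsReciprocityChar.map_right_sq (hΨ : IsReciprocityChar (resolventCube x y) Ψ)
    (h : IsCoprime x y) (hy : ¬ 3 ∣ y) : Ψ y ^ 2 = 1 := by
  have hnat : Ψ y.natAbs = 1 := by
    refine map_eq_one_of_forall_prime_dvd (Ψ.comp (Nat.castRingHom ℤ : ℕ →* ℤ))
      (Int.natAbs_ne_zero.2 fun h0 ↦ hy (h0 ▸ dvd_zero 3)) fun r hr hry ↦ ?_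
    have : Fact r.Prime := ⟨hr⟩
    rw [← Int.natCast_dvd] at hry
    have hr3 : r ≠ 3 := by
      rintro rfl
      exact hy hry
    have hrN : IsCoprime (r : ℤ) (resolventCube x y).norm :=
      (isCoprime_right_norm_resolventCube h hy).of_isCoprime_of_dvd_left hry
    obtain ⟨φ⟩ := nonempty_ringHom (AlgebraicClosure (ZMod r))
    have hndvd := (Nat.prime_iff_prime_int.1 hr).coprime_iff_not_dvd.1 hrN
    refine eq_one_of_map_eq_one hr3 φ (hΨ.pow_three r hrN) ?_
    change φ (Ψ r) = 1
    rw [← hΨ.reciprocity r hr3 hndvd φ]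
    refine cubicResidue_eq_one_of_map_star φ hr3 hndvd ?_
    rw [eq_neg_iff_add_eq_zero, add_comm, ← map_add, resolventCube_add_star, map_intCast,
      CharP.intCast_eq_zero_iff _ r]
    exact hry.mul_left _
  rw [← map_pow, ← Int.natAbs_sq, map_pow, hnat, one_pow]

lemma IsReciprocityChar.map_form (hΨ : IsReciprocityChar (resolventCube x y) Ψ)
    (hodd : Odd (x ^ 2 + x * y + 21 * y ^ 2)) (h : IsCoprime x y) (hy : ¬ 3 ∣ y) :
    Ψ (x ^ 2 + x * y + 21 * y ^ 2) = 1 := by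
  have h2 : IsCoprime 2 (resolventCube x y).norm := by
    rw [Int.isCoprime_two_left, norm_resolventCube]
    grind
  calc Ψ (x ^ 2 + x * y + 21 * y ^ 2) = Ψ 3 ^ 3 * Ψ (x ^ 2 + x * y + 21 * y ^ 2) := by
        rw [hΨ.pow_three 3 (isCoprime_three_norm_resolventCube hy), one_mul]
    _ = Ψ (27 * (x ^ 2 + x * y + 21 * y ^ 2)) := by rw [← map_pow, ← map_mul]; norm_num
    _ = Ψ (2 ^ 3 * y ^ 2) :=
        hΨ.periodic _ _ (by rw [norm_resolventCube]; norm_num)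
    _ = 1 := by rw [map_mul, map_pow, map_pow, hΨ.pow_three 2 h2, hΨ.map_right_sq h hy, one_mul]

end EisensteinInt

/-- The characteristic polynomial `X ^ 3 + X ^ 2 + X + 2`, of discriminant `-83`. -/
def cubic83 : Cubic ℤ := ⟨1, 1, 1, 2⟩

section Roots

variable {K : Type*} [Field K] {a b c : K}

lemma cubic83_coeffs (hP : cubic83.map (Int.castRingHom K) = cubicOfRoots a b c) :
    a + b + c = -1 ∧ a * b + a * c + b * c = 1 ∧ a * b * c = -2 := by
  simp only [cubicOfRoots, cubic83, Cubic.map, Cubic.mk.injEq, map_one, map_ofNat] at hP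
  obtain ⟨-, h1, h2, h3⟩ := hP
  exact ⟨by linear_combination h1, h2.symm, by linear_combination h3⟩

lemma vandermonde_cubic83_sq (hP : cubic83.map (Int.castRingHom K) = cubicOfRoots a b c) :
    vandermonde a b c ^ 2 = -83 := by
  rw [vandermonde_sq, ← hP]
  norm_num [Cubic.map, Cubic.discr, cubic83]

lemma lagrangeResolvent_cubic83_ne_zero (hP : cubic83.map (Int.castRingHom K) = cubicOfRoots a b c)
    (h2 : (2 : K) ≠ 0) {w : K} (hw : w ^ 2 = -w - 1) : lagrangeResolvent w a b c ≠ 0 := by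
  obtain ⟨h1, h2', -⟩ := cubic83_coeffs hP
  refine left_ne_zero_of_mul (b := lagrangeResolvent (w ^ 2) a b c) ?_
  rw [lagrangeResolvent_mul hw, h1, h2']
  norm_num [h2]

variable {p : ℕ} [CharP K p]

lemma vandermonde_cubic83_ne_zero (hP : cubic83.map (Int.castRingHom K) = cubicOfRoots a b c)
    (hp : p ≠ 83) : vandermonde a b c ≠ 0 := fun h ↦ by
  have hV := vandermonde_cubic83_sq hP
  rw [h, zero_pow two_ne_zero, eq_comm, neg_eq_zero] at hV
  exact CharP.cast_ne_zero_of_ne_of_prime K (by norm_num : Nat.Prime 83) hp (by exact_mod_cast hV)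

lemma prime_dvd_iff_map_roots [Fact p.Prime] {U : ℕ → ℤ} (hU : IsFundamentalSeq cubic83 U)
    (hP : cubic83.map (Int.castRingHom K) = cubicOfRoots a b c)
    (hp : p ∉ ({2, 3, 47, 83} : Set ℕ)) : (p : ℤ) ∣ U (p - 1) ↔
      frobenius K p a = a ∧ frobenius K p b = b ∧ frobenius K p c = c := by
  obtain ⟨hp2, -, hp47, hp83⟩ : p ≠ 2 ∧ p ≠ 3 ∧ p ≠ 47 ∧ p ≠ 83 := by simpa using hp
  have hdvd {n : ℕ} (hn : n.Prime) (hpn : p ≠ n) : ¬ p ∣ n := fun h ↦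
    hpn ((Nat.prime_dvd_prime_iff_eq Fact.out hn).1 h)
  refine hU.prime_dvd_iff hP ?_ ?_ ?_ <;> rw [Int.natCast_dvd]
  · exact hdvd (by norm_num : Nat.Prime 83) hp83
  · exact hdvd Nat.prime_two hp2
  · exact hdvd (by norm_num : Nat.Prime 47) hp47

lemma exists_cubic83_roots_vandermonde_eq [IsAlgClosed K] {v : K} (hv : v ^ 2 = -83) :
    ∃ a b c : K, cubic83.map (Int.castRingHom K) = cubicOfRoots a b c ∧ vandermonde a b c = v := by
  obtain ⟨a, b, c, hP⟩ := exists_eq_cubicOfRoots (P := cubic83.map (Int.castRingHom K))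
    (map_one _)
  obtain h | h := sq_eq_sq_iff_eq_or_eq_neg.1 ((vandermonde_cubic83_sq hP).trans hv.symm)
  · exact ⟨a, b, c, hP, h⟩
  · refine ⟨a, c, b, ?_, ?_⟩
    · rw [hP]
      ext <;> simp only [cubicOfRoots] <;> ring
    · rw [← neg_eq_iff_eq_neg.2 h, vandermonde, vandermonde]
      ring

end Roots

namespace EisensteinInt

open QuadraticAlgebra

section Residue

variable {K : Type*} [Field K] {a b c : K} {x y : ℤ}

lemma map_resolventCube (φ : EisensteinInt →+* K)
    (hP : cubic83.map (Int.castRingHom K) = cubicOfRoots a b c) (h2 : (2 : K) ≠ 0)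
    (hV : y * vandermonde a b c = 2 * x + y) :
    φ (resolventCube x y) = y * lagrangeResolvent (φ ω) a b c ^ 3 := by
  have hcube := two_mul_lagrangeResolvent_pow_three (a := a) (b := b) (c := c) (map_omega_sq φ)
  obtain ⟨h1, h2', h3⟩ := cubic83_coeffs hP
  rw [h1, h2', h3] at hcube
  refine mul_left_cancel₀ h2 ?_
  rw [map_apply, resolventCube]
  push_cast
  linear_combination -y * hcube - 3 * (1 + 2 * φ ω) * hV

lemma map_resolventCube_sq_mul_star (φ : EisensteinInt →+* K)
    (hP : cubic83.map (Int.castRingHom K) = cubicOfRoots a b c) (h2 : (2 : K) ≠ 0)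
    (hV : y * vandermonde a b c = 2 * x + y) :
    φ (resolventCube x y ^ 2 * star (resolventCube x y)) =
      ((-2 * y : ℤ) * lagrangeResolvent (φ ω) a b c) ^ 3 := by
  have hω : φ (star ω) = φ ω ^ 2 := by rw [← map_pow]; congr 1
  have hstar : φ (star (resolventCube x y)) = y * lagrangeResolvent (φ ω ^ 2) a b c ^ 3 :=
    hω ▸ map_resolventCube (φ.comp (starRingEnd EisensteinInt)) hP h2 hV
  have hmul := lagrangeResolvent_mul (a := a) (b := b) (c := c) (map_omega_sq φ)
  obtain ⟨h1, h2', -⟩ := cubic83_coeffs hP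
  rw [map_mul, map_pow, map_resolventCube φ hP h2 hV, hstar]
  calc (y * lagrangeResolvent (φ ω) a b c ^ 3) ^ 2 * (y * lagrangeResolvent (φ ω ^ 2) a b c ^ 3)
    _ = (y * lagrangeResolvent (φ ω) a b c *
        (lagrangeResolvent (φ ω) a b c * lagrangeResolvent (φ ω ^ 2) a b c)) ^ 3 := by ring
    _ = ((-2 * y : ℤ) * lagrangeResolvent (φ ω) a b c) ^ 3 := by
      rw [hmul, h1, h2']; push_cast; ring

theorem prime_dvd_iff_cubicResidue_eq_one {U : ℕ → ℤ} (hU : IsFundamentalSeq cubic83 U) {p : ℕ}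
    [Fact p.Prime] (hp : p ∉ ({2, 3, 47, 83} : Set ℕ)) [CharP K p] [IsAlgClosed K]
    (hy : ¬ (p : ℤ) ∣ y) (hxy : (p : ℤ) ∣ x ^ 2 + x * y + 21 * y ^ 2) (φ : EisensteinInt →+* K) :
    (p : ℤ) ∣ U (p - 1) ↔ cubicResidue p φ (resolventCube x y) = 1 := by
  obtain ⟨hp2, hp3, -, hp83⟩ : p ≠ 2 ∧ p ≠ 3 ∧ p ≠ 47 ∧ p ≠ 83 := by simpa using hp
  have h2 : (2 : K) ≠ 0 := by
    exact_mod_cast CharP.cast_ne_zero_of_ne_of_prime K Nat.prime_two hp2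
  have hyK : (y : K) ≠ 0 := by rwa [Ne, CharP.intCast_eq_zero_iff K p]
  have hV2 : ((2 * x + y : ℤ) / y : K) ^ 2 = -83 := by
    have hxyK := (CharP.intCast_eq_zero_iff K p _).2 hxy
    push_cast at hxyK ⊢
    field_simp
    linear_combination 4 * hxyK
  obtain ⟨a, b, c, hP, hV⟩ := exists_cubic83_roots_vandermonde_eq hV2
  have hyV : y * vandermonde a b c = 2 * x + y := by
    rw [hV, mul_div_cancel₀ _ hyK]
    push_cast
    rfl
  have hσV : frobenius K p (vandermonde a b c) = vandermonde a b c := by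
    rw [hV, map_div₀, map_intCast, map_intCast]
  have hu := lagrangeResolvent_cubic83_ne_zero hP h2 (map_omega_sq φ)
  have hω : φ ω ^ 3 = 1 := by rw [← map_pow, isPrimitiveRoot_omega.pow_eq_one, map_one]
  have hω1 : φ ω ≠ 1 := fun h ↦
    isPrimitiveRoot_omega.ne_one (by norm_num) (eq_one_of_map_eq_one hp3 φ
      isPrimitiveRoot_omega.pow_eq_one h)
  have hfrob (z : K) : z ^ p ^ 2 = frobenius K p (frobenius K p z) := by
    rw [frobenius_def, frobenius_def, ← pow_mul, sq]
  have h2y : ((-2 * y : ℤ) : K) ≠ 0 := by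
    push_cast
    exact mul_ne_zero (neg_ne_zero.2 h2) hyK
  rw [prime_dvd_iff_map_roots hU hP hp, cubicResidue_eq_one_iff_of_eq_pow_three φ hp3
    (mul_ne_zero h2y hu) (map_resolventCube_sq_mul_star φ hP h2 hyV),
    ← map_map_lagrangeResolvent_eq_self_iff (map_frobenius_cubicOfRoots hP)
    (vandermonde_cubic83_ne_zero hP hp83) hσV h2 hω1 hω (by rw [← hfrob, map_pow_sq hp3]) hu, hfrob,
    map_mul, map_mul, map_intCast, map_intCast, mul_right_inj' h2y]

end Residue

section ReciprocityLaw

lemma isCoprime_of_squarefree {x y : ℤ} (h : Squarefree (x ^ 2 + x * y + 21 * y ^ 2)) :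
    IsCoprime x y := by
  refine IsRelPrime.isCoprime fun d hx hy ↦ h d ?_
  simp only [sq]
  exact ((mul_dvd_mul hx hx).add (mul_dvd_mul hx hy)).add ((mul_dvd_mul hy hy).mul_left 21)

variable {U : ℕ → ℤ} (hU : IsFundamentalSeq cubic83 U) {p : ℕ} [Fact p.Prime]
  (hp : p ∉ ({2, 3, 47, 83} : Set ℕ)) {x y : ℤ}

include hU hp

lemma IsReciprocityChar.map_prime_eq_one_iff {Ψ : ℤ →* EisensteinInt}
    (hΨ : IsReciprocityChar (resolventCube x y) Ψ) (hxy : IsCoprime x y)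
    (hdvd : (p : ℤ) ∣ x ^ 2 + x * y + 21 * y ^ 2) : Ψ p = 1 ↔ (p : ℤ) ∣ U (p - 1) := by
  obtain ⟨hp2, hp3, -⟩ : p ≠ 2 ∧ p ≠ 3 ∧ p ≠ 47 ∧ p ≠ 83 := by simpa using hp
  have hprime := Nat.prime_iff_prime_int.1 (Fact.out : p.Prime)
  have hpy : ¬ (p : ℤ) ∣ y := fun hy ↦ by
    have hx : (p : ℤ) ∣ x := hprime.dvd_of_dvd_pow (n := 2) <| by
      rw [show x ^ 2 = x ^ 2 + x * y + 21 * y ^ 2 - y * (x + 21 * y) by ring]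
      exact hdvd.sub (hy.mul_right _)
    exact hprime.not_isUnit (hxy.isUnit_of_dvd' hx hy)
  have hp2' : ¬ (p : ℤ) ∣ 2 := fun h ↦
    hp2 ((Nat.prime_dvd_prime_iff_eq Fact.out Nat.prime_two).1 (by exact_mod_cast h))
  have hpN : ¬ (p : ℤ) ∣ (resolventCube x y).norm := fun h ↦ by
    rw [norm_resolventCube, dvd_sub_right (hdvd.mul_left 27)] at h
    obtain h | h := hprime.dvd_or_dvd h
    · exact hp2' (hprime.dvd_of_dvd_pow (show (p : ℤ) ∣ 2 ^ 3 from h))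
    · exact hpy (hprime.dvd_of_dvd_pow h)
  have hcube := hΨ.pow_three p (hprime.coprime_iff_not_dvd.2 hpN)
  obtain ⟨φ⟩ := nonempty_ringHom (AlgebraicClosure (ZMod p))
  rw [prime_dvd_iff_cubicResidue_eq_one hU hp hpy hdvd φ, hΨ.reciprocity p hp3 hpN φ]
  exact ⟨fun h ↦ by rw [h, map_one], eq_one_of_map_eq_one hp3 φ hcube⟩

theorem prime_dvd_of_eq_form (h : (p : ℤ) = x ^ 2 + x * y + 21 * y ^ 2) (hy : ¬ 3 ∣ y) :
    (p : ℤ) ∣ U (p - 1) := by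
  have hprime := Nat.prime_iff_prime_int.1 (Fact.out : p.Prime)
  have hxy : IsCoprime x y := isCoprime_of_squarefree (h ▸ hprime.squarefree)
  obtain ⟨Ψ, hΨ⟩ := (isPrimary_resolventCube hy).exists_isReciprocityChar
  rw [← hΨ.map_prime_eq_one_iff hU hp hxy h.dvd, h]
  refine hΨ.map_form ?_ hxy hy
  have hp2 : p ≠ 2 := fun h2 ↦ hp (by simp [h2])
  rw [← h, Int.odd_coe_nat]
  exact (Fact.out : p.Prime).odd_of_ne_two hp2

theorem prime_dvd_iff_of_mul_eq_form {l : ℕ} [Fact l.Prime] (hl : l ∉ ({2, 3, 47, 83} : Set ℕ))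
    (hlp : l ≠ p) (h : (l * p : ℤ) = x ^ 2 + x * y + 21 * y ^ 2) (hy : ¬ 3 ∣ y) :
    (l : ℤ) ∣ U (l - 1) ↔ (p : ℤ) ∣ U (p - 1) := by
  have hodd {q : ℕ} [Fact q.Prime] (hq : q ∉ ({2, 3, 47, 83} : Set ℕ)) : Odd (q : ℤ) := by
    rw [Int.odd_coe_nat]
    exact (Fact.out : q.Prime).odd_of_ne_two fun h2 ↦ hq (by simp [h2])
  have hsq : Squarefree (l * p : ℤ) := by
    rw [← Nat.cast_mul, Int.squarefree_natCast,
      Nat.squarefree_mul ((Nat.coprime_primes Fact.out Fact.out).2 hlp)]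
    exact ⟨(Fact.out : l.Prime).prime.squarefree, (Fact.out : p.Prime).prime.squarefree⟩
  have hxy : IsCoprime x y := isCoprime_of_squarefree (h ▸ hsq)
  obtain ⟨Ψ, hΨ⟩ := (isPrimary_resolventCube hy).exists_isReciprocityChar
  have hmul : Ψ l * Ψ p = 1 := by
    rw [← map_mul, h]
    exact hΨ.map_form (h ▸ (hodd hl).mul (hodd hp)) hxy hy
  rw [← hΨ.map_prime_eq_one_iff hU hl hxy (h ▸ dvd_mul_right _ _),
    ← hΨ.map_prime_eq_one_iff hU hp hxy (h ▸ dvd_mul_left _ _)]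
  exact ⟨fun h1 ↦ by rwa [h1, one_mul] at hmul, fun h1 ↦ by rwa [h1, mul_one] at hmul⟩

end ReciprocityLaw

end EisensteinInt

section BinaryForms

lemma exists_reduced_form {a b c : ℤ} (ha : 0 < a) (hdisc : b ^ 2 < 4 * a * c) :
    ∃ a' b' c' : ℤ, |b'| ≤ a' ∧ a' ≤ c' ∧ b' ^ 2 - 4 * a' * c' = b ^ 2 - 4 * a * c ∧
      ∀ x y, ∃ u v, a * x ^ 2 + b * x * y + c * y ^ 2 = a' * u ^ 2 + b' * u * v + c' * v ^ 2 := by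
  induction hn : a.natAbs using Nat.strong_induction_on generalizing a b c with
  | _ n ih =>
    obtain ⟨k, hk⟩ : ∃ k, |b - 2 * a * k| ≤ a := by
      refine ⟨(b + a) / (2 * a), ?_⟩
      have hmod := Int.emod_def (b + a) (2 * a)
      have hnonneg := Int.emod_nonneg (b + a) (by omega : 2 * a ≠ 0)
      have hlt := Int.emod_lt_of_pos (b + a) (by omega : 0 < 2 * a)
      rw [abs_le]
      omega
    set d := a * k ^ 2 - b * k + c with hd
    have hdisc' : (b - 2 * a * k) ^ 2 - 4 * a * d = b ^ 2 - 4 * a * c := by rw [hd]; ring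
    have hshift (x y : ℤ) : a * x ^ 2 + b * x * y + c * y ^ 2 =
        a * (x + k * y) ^ 2 + (b - 2 * a * k) * (x + k * y) * y + d * y ^ 2 := by rw [hd]; ring
    by_cases had : a ≤ d
    · exact ⟨a, _, d, hk, had, hdisc', fun x y ↦ ⟨_, _, hshift x y⟩⟩
    · have hd0 : 0 < d := by nlinarith [sq_nonneg (b - 2 * a * k)]
      obtain ⟨a', b', c', hab, hac, hD, hrep⟩ := ih d.natAbs (by omega) hd0
        (b := b - 2 * a * k) (c := a) (by linarith) rfl
      refine ⟨a', b', c', hab, hac, by linarith, fun x y ↦ ?_⟩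
      obtain ⟨u, v, huv⟩ := hrep y (x + k * y)
      exact ⟨u, v, by rw [← huv, hshift]; ring⟩

lemma exists_form_disc_83 {n t : ℤ} (hn : 0 < n) (ht : n ∣ t ^ 2 + t + 21) :
    ∃ x y, n = x ^ 2 + x * y + 21 * y ^ 2 ∨ n = 3 * x ^ 2 + x * y + 7 * y ^ 2 := by
  obtain ⟨c, hc⟩ := ht
  obtain ⟨a', b', c', hab, hac, hD, hrep⟩ := exists_reduced_form (b := 2 * t + 1) (c := c) hn
    (by nlinarith)
  obtain ⟨u, v, huv⟩ := hrep 1 0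
  replace hD : b' ^ 2 + 83 = 4 * (a' * c') := by linear_combination hD + 4 * hc
  have hb2 : b' ^ 2 ≤ a' ^ 2 := sq_le_sq' (abs_le.1 hab).1 (abs_le.1 hab).2
  have ha5 : a' ≤ 5 := by nlinarith
  have hpos : 0 < a' := by
    refine ((abs_nonneg b').trans hab).lt_of_ne ?_
    rintro rfl
    nlinarith
  obtain ⟨hb, hb'⟩ := abs_le.1 hab
  have hform : (a' = 1 ∧ c' = 21 ∨ a' = 3 ∧ c' = 7) ∧ (b' = 1 ∨ b' = -1) := by
    interval_cases a' <;> interval_cases b' <;> omega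
  have hn' : n = a' * u ^ 2 + b' * u * v + c' * v ^ 2 := by linear_combination huv
  obtain ⟨⟨rfl, rfl⟩ | ⟨rfl, rfl⟩, rfl | rfl⟩ := hform
  · exact ⟨u, v, .inl (by linear_combination hn')⟩
  · exact ⟨u, -v, .inl (by linear_combination hn')⟩
  · exact ⟨u, v, .inr (by linear_combination hn')⟩
  · exact ⟨u, -v, .inr (by linear_combination hn')⟩

lemma exists_dvd_of_isSquare {p : ℕ} [Fact p.Prime] (hp : p ≠ 2) (h : IsSquare (-83 : ZMod p)) :
    ∃ t : ℤ, (p : ℤ) ∣ t ^ 2 + t + 21 := by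
  obtain ⟨z, hz⟩ := h
  have h2 : (2 : ZMod p) ≠ 0 := by
    exact_mod_cast CharP.cast_ne_zero_of_ne_of_prime (ZMod p) Nat.prime_two hp
  obtain ⟨t, ht⟩ := ZMod.intCast_surjective ((z - 1) / 2)
  refine ⟨t, (ZMod.intCast_zmod_eq_zero_iff_dvd _ p).1 ?_⟩
  push_cast
  rw [ht]
  field_simp
  linear_combination -hz

end BinaryForms

section Disc83

open EisensteinInt

variable {U : ℕ → ℤ} (hU : IsFundamentalSeq cubic83 U) {p : ℕ} [Fact p.Prime]
  (hp : p ∉ ({2, 3, 47, 83} : Set ℕ))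

include hp

lemma not_three_dvd : ¬ (3 : ℤ) ∣ p := fun h ↦ hp <| by
  simp [← (Nat.prime_dvd_prime_iff_eq Nat.prime_three Fact.out).1 (by exact_mod_cast h : 3 ∣ p)]

include hU

lemma isSquare_of_prime_dvd (h : (p : ℤ) ∣ U (p - 1)) :
    IsSquare (-83 : ZMod p) := by
  obtain ⟨hp2, -, -, hp83⟩ : p ≠ 2 ∧ p ≠ 3 ∧ p ≠ 47 ∧ p ≠ 83 := by simpa using hp
  let K := AlgebraicClosure (ZMod p)
  obtain ⟨a, b, c, hP⟩ := exists_eq_cubicOfRoots (P := cubic83.map (Int.castRingHom K))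
    (map_one _)
  obtain ⟨ha, hb, hc⟩ := (prime_dvd_iff_map_roots hU hP hp).1 h
  have hV0 := vandermonde_cubic83_ne_zero hP hp83
  have hσV : vandermonde a b c ^ p = vandermonde a b c := by
    rw [← frobenius_def, vandermonde]
    simp only [map_mul, map_sub, ha, hb, hc]
  have hV : algebraMap (ZMod p) K (-83) = vandermonde a b c ^ 2 := by
    rw [vandermonde_cubic83_sq hP, map_neg, map_ofNat]
  have h83 : (-83 : ZMod p) ≠ 0 := fun h0 ↦ by
    rw [h0, map_zero] at hV
    exact pow_ne_zero 2 hV0 hV.symm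
  refine (ZMod.euler_criterion p h83).2 ((algebraMap (ZMod p) K).injective ?_)
  have hodd := Nat.two_mul_div_two_add_one_of_odd ((Fact.out : p.Prime).odd_of_ne_two hp2)
  rw [map_pow, hV, ← pow_mul, map_one]
  refine mul_right_cancel₀ hV0 ?_
  rw [← pow_succ, hodd, hσV, one_mul]

lemma prime_dvd_of_principal_form {x y : ℤ}
    (h : (p : ℤ) = x ^ 2 + x * y + 21 * y ^ 2) : (p : ℤ) ∣ U (p - 1) := by
  have : Fact (Nat.Prime 23) := ⟨by norm_num⟩
  have h23 : (23 : ℤ) ∣ U (23 - 1) :=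
    prime_dvd_of_eq_form hU (p := 23) (x := 1) (y := 1) (by norm_num) (by norm_num) (by norm_num)
  obtain rfl | hp23 := eq_or_ne p 23
  · exact h23
  by_cases hy : 3 ∣ y
  · refine (prime_dvd_iff_of_mul_eq_form hU hp (l := 23) (x := x - 21 * y) (y := x + 2 * y)
      (by norm_num) hp23.symm ?_ fun hxy ↦ ?_).1 h23
    · push_cast
      linear_combination 23 * h
    · have hx : 3 ∣ x := by omega
      exact not_three_dvd hp (h ▸ ((dvd_pow hx two_ne_zero).add (hx.mul_right y)).add
        ((dvd_pow hy two_ne_zero).mul_left 21))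
  · exact prime_dvd_of_eq_form hU hp h hy

lemma not_prime_dvd_of_nonprincipal_form {x y : ℤ}
    (h : (p : ℤ) = 3 * x ^ 2 + x * y + 7 * y ^ 2) : ¬ (p : ℤ) ∣ U (p - 1) := by
  have : Fact (Nat.Prime 7) := ⟨by norm_num⟩
  have : Fact (Nat.Prime 11) := ⟨by norm_num⟩
  have h7 : ¬ (7 : ℤ) ∣ U (7 - 1) := by
    have hrec (n : ℕ) : U (n + 3) + U (n + 2) + U (n + 1) + 2 * U n = 0 := by
      simpa [cubic83] using hU.recurrence n
    have h2 : U 2 = -1 := hU.two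
    have h3 := hrec 0
    have h4 := hrec 1
    have h5 := hrec 2
    have h6 := hrec 3
    simp only [zero_add, Nat.reduceAdd, hU.zero, hU.one, h2] at h3 h4 h5 h6
    rw [show U (7 - 1) = -2 by simp only [Nat.reduceSub]; linarith]
    norm_num
  have h11 : ¬ (11 : ℤ) ∣ U (11 - 1) :=
    (prime_dvd_iff_of_mul_eq_form hU (l := 7) (p := 11) (x := 7) (y := 1) (by norm_num)
      (by norm_num) (by norm_num) (by norm_num) (by norm_num)).not.1 h7
  obtain rfl | hp7 := eq_or_ne p 7
  · exact h7
  obtain rfl | hp11 := eq_or_ne p 11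
  · exact h11
  by_cases hx : 3 ∣ x
  · refine (prime_dvd_iff_of_mul_eq_form hU hp (l := 11) (x := 3 * x + 8 * y) (y := x - y)
      (by norm_num) hp11.symm ?_ fun hxy ↦ ?_).not.1 h11
    · push_cast
      linear_combination 11 * h
    · have hy : 3 ∣ y := by omega
      exact not_three_dvd hp (h ▸ (((dvd_mul_right 3 _).add (hx.mul_right y))).add
        ((dvd_pow hy two_ne_zero).mul_left 7))
  · refine (prime_dvd_iff_of_mul_eq_form hU hp (l := 7) (x := 7 * y) (y := x)
      (by norm_num) hp7.symm ?_ hx).not.1 h7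
    push_cast
    linear_combination 7 * h

end Disc83

theorem table2_disc83 (U : ℕ → ℤ)
    (h0 : U 0 = 0) (h1 : U 1 = 1) (h2 : U 2 = -1)
    (hrec : ∀ n, U (n + 3) + U (n + 2) + U (n + 1) + 2 * U n = 0)
    (p : ℕ) (hp : p.Prime) (hpe : p ∉ ({2, 3, 47, 83} : Set ℕ)) :
    (p : ℤ) ∣ U (p - 1) ↔ ∃ X Y : ℤ, 4 * (p : ℤ) = X ^ 2 + 83 * Y ^ 2 := by
  have : Fact p.Prime := ⟨hp⟩
  have hU : IsFundamentalSeq cubic83 U :=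
    ⟨h0, h1, h2, fun n ↦ by simpa [cubic83] using hrec n⟩
  constructor
  · intro h
    obtain ⟨t, ht⟩ := exists_dvd_of_isSquare (fun h2 ↦ hpe (by simp [h2]))
      (isSquare_of_prime_dvd hU hpe h)
    obtain ⟨x, y, hform | hform⟩ := exists_form_disc_83 (Int.natCast_pos.2 hp.pos) ht
    · exact ⟨2 * x + y, y, by linear_combination 4 * hform⟩
    · exact absurd h (not_prime_dvd_of_nonprincipal_form hU hpe hform)
  · rintro ⟨X, Y, hXY⟩
    obtain ⟨x, hx⟩ : 2 ∣ X - Y := Int.prime_two.dvd_of_dvd_pow (n := 2)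
      ⟨2 * p - X * Y - 41 * Y ^ 2, by linear_combination -hXY⟩
    obtain rfl : X = 2 * x + Y := by linarith
    exact prime_dvd_of_principal_form hU hpe (x := x) (y := Y) (by linarith)
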